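/- Let p ∈ (1,∞), T ∈ (0,∞), u_0 ∈ L_p(ℝ^d), and f ∈ L_p((0,T); L_p(ℝ^d)). Suppose u : [0,T] → L_p(ℝ^d) is a weak solution of ∂_t u = a^{ij}(t) u_{x^i x^j} + f with u(0) = u_0, that u is continuous from [0,T] into L_p(ℝ^d), and that ∫_0^T |a(t)| ‖u(t,·)‖_{L_p} dt < ∞. Then sup_{t∈[0,T]} ‖u(t,·)‖_{L_p}^p ≤ N ( ‖u_0‖_{L_p}^p + ∫_0^T ‖f(t,·)‖_{L_p}^p dt ), where the constant N depends only on p and T (in particular, not on the coefficients a^{ij}). -/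

import Mathlib

open MeasureTheory Set ENNReal

noncomputable section

/-- The partial derivative `∂_{x^i} φ` of a function on `ℝ^d`. -/
def pd {d : ℕ} (i : Fin d) (φ : (Fin d → ℝ) → ℝ) : (Fin d → ℝ) → ℝ :=
  fun x => fderiv ℝ φ x (Pi.single i 1)

/-- `|a(t)| = max_{i,j} |a^{ij}(t)|`. -/
def aMax {d : ℕ} (a : ℝ → Fin d → Fin d → ℝ) (t : ℝ) : ℝ :=
  ⨆ i, ⨆ j, |a t i j|

/-- `u` is a weak solution of `∂_t u = a^{ij}(t) u_{x^i x^j} + f`, `u(0) = u₀`, on `[0,T]`. -/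
def IsWeakSolution {d : ℕ} (p : ℝ≥0∞) (T : ℝ) (a : ℝ → Fin d → Fin d → ℝ)
    (u0 : Lp ℝ p (volume : Measure (Fin d → ℝ)))
    (f u : ℝ → Lp ℝ p (volume : Measure (Fin d → ℝ))) : Prop :=
  ∀ φ : (Fin d → ℝ) → ℝ, ContDiff ℝ (⊤ : ℕ∞) φ → HasCompactSupport φ →
    ∀ t ∈ Icc (0:ℝ) T,
      (∫ x, u t x * φ x) =
        (∫ x, u0 x * φ x) +
        ∫ s in Ioc (0:ℝ) t,
          ((∑ i, ∑ j, a s i j * ∫ x, u s x * pd i (pd j φ) x)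
            + ∫ x, f s x * φ x)

/-!
Mollify: correlating with a test function `ρ` turns `u` into `W = C_ρ u`, which satisfies
`W(t) = W(0) + ∫₀ᵗ (∑ aⁱʲ ∂ᵢ∂ⱼ W + C_ρ f) ds` as a Bochner integral in `L_p`. Hence `‖W‖` is
absolutely continuous, and at almost every `t` its derivative is `ℓ(W'(t))` for any functional `ℓ`
norming at `W(t)`. Translations are isometries of `L_p`, so the function `x ↦ ℓ(W(t, · - x))`
attains its maximum at `x = 0`, where its Hessian is nonpositive; the second order term therefore
contributes nothing positive, whatever the size of the coefficients. This gives
`‖W(t)‖ ≤ ‖W(0)‖ + ∫₀ᵗ ‖C_ρ f‖ ds`. Letting `ρ` tend to the Dirac mass and applying Jensen's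
inequality yields the estimate with `N = (1 + T) ^ (p - 1)`.
-/

open Filter Topology
open scoped Convolution

section NormingFunctional

variable {E : Type*} [NormedAddCommGroup E] [NormedSpace ℝ E]

/-- `ℓ` is a norming functional at `w`, i.e. a subgradient of the norm at `w`. -/
def IsNormingAt (ℓ : StrongDual ℝ E) (w : E) : Prop :=
  ‖ℓ‖ ≤ 1 ∧ ℓ w = ‖w‖

lemma exists_isNormingAt (w : E) : ∃ ℓ : StrongDual ℝ E, IsNormingAt ℓ w :=
  exists_dual_vector'' ℝ w

lemma IsNormingAt.apply_le_norm {ℓ : StrongDual ℝ E} {w : E} (h : IsNormingAt ℓ w) (v : E) :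
    ℓ v ≤ ‖v‖ :=
  calc ℓ v ≤ ‖ℓ v‖ := Real.le_norm_self _
    _ ≤ ‖v‖ := by simpa using ℓ.le_of_opNorm_le h.1 v

lemma IsNormingAt.deriv_norm_eq {ℓ : StrongDual ℝ E} {W : ℝ → E} {w' : E} {t : ℝ}
    (hℓ : IsNormingAt ℓ (W t)) (hW : HasDerivAt W w' t)
    (hn : DifferentiableAt ℝ (fun s => ‖W s‖) t) :
    deriv (fun s => ‖W s‖) t = ℓ w' := by
  have hmin : IsLocalMin (fun s => ‖W s‖ - ℓ (W s)) t :=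
    .of_forall fun s => by simpa [hℓ.2] using hℓ.apply_le_norm (W s)
  have hd := hn.hasDerivAt.sub (ℓ.hasFDerivAt.comp_hasDerivAt t hW)
  exact sub_eq_zero.1 (hmin.hasDerivAt_eq_zero hd)

lemma absolutelyContinuousOnInterval_of_dist_le {X Y : Type*} [PseudoMetricSpace X]
    [PseudoMetricSpace Y] {f : ℝ → X} {g : ℝ → Y} {a b : ℝ}
    (hg : AbsolutelyContinuousOnInterval g a b)
    (h : ∀ s ∈ uIcc a b, ∀ t ∈ uIcc a b, dist (f s) (f t) ≤ dist (g s) (g t)) :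
    AbsolutelyContinuousOnInterval f a b := by
  refine squeeze_zero' (.of_forall fun _ => Finset.sum_nonneg fun _ _ => dist_nonneg) ?_ hg
  filter_upwards [mem_inf_of_right (mem_principal_self _)] with I hI
  exact Finset.sum_le_sum fun i hi => h _ (hI.1 i hi).1 _ (hI.1 i hi).2

section Primitive

variable {W F : ℝ → E} {w₀ : E} {a b : ℝ}

lemma absolutelyContinuousOnInterval_norm_of_eq_add_integral
    (hF : IntervalIntegrable F volume a b)
    (hW : ∀ t ∈ uIcc a b, W t = w₀ + ∫ s in a..t, F s) :
    AbsolutelyContinuousOnInterval (fun t => ‖W t‖) a b := by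
  refine absolutelyContinuousOnInterval_of_dist_le
    (hF.norm.absolutelyContinuousOnInterval_intervalIntegral left_mem_uIcc) fun s hs t ht => ?_
  have hFa {r : ℝ} (hr : r ∈ uIcc a b) : IntervalIntegrable F volume a r :=
    hF.mono_set (uIcc_subset_uIcc_left hr)
  calc dist ‖W s‖ ‖W t‖ ≤ ‖W s - W t‖ := abs_norm_sub_norm_le _ _
    _ = ‖∫ r in t..s, F r‖ := by
      rw [hW s hs, hW t ht, add_sub_add_left_eq_sub,
        intervalIntegral.integral_interval_sub_left (hFa hs) (hFa ht)]
    _ ≤ |∫ r in t..s, ‖F r‖| := intervalIntegral.norm_integral_le_abs_integral_norm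
    _ = dist (∫ r in a..s, ‖F r‖) (∫ r in a..t, ‖F r‖) := by
      rw [Real.dist_eq,
        intervalIntegral.integral_interval_sub_left (hFa hs).norm (hFa ht).norm]

variable [CompleteSpace E]

lemma ae_hasDerivAt_of_eq_add_integral (hF : IntervalIntegrable F volume a b)
    (hW : ∀ t ∈ Icc a b, W t = w₀ + ∫ s in a..t, F s) :
    ∀ᵐ t, t ∈ Ioo a b → HasDerivAt W (F t) t := by
  filter_upwards [hF.ae_hasDerivAt_integral] with t hder ht
  have hab : a ≤ b := (ht.1.trans ht.2).le
  refine ((hder (uIcc_of_le hab ▸ Ioo_subset_Icc_self ht) a left_mem_uIcc).const_add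
    w₀).congr_of_eventuallyEq ?_
  filter_upwards [Ioo_mem_nhds ht.1 ht.2] with s hs using hW s (Ioo_subset_Icc_self hs)

theorem norm_le_norm_add_integral_of_isNormingAt_apply_le {g : ℝ → ℝ}
    (hF : IntervalIntegrable F volume a b) (hg : IntervalIntegrable g volume a b)
    (hW : ∀ t ∈ Icc a b, W t = w₀ + ∫ s in a..t, F s)
    (hFg : ∀ᵐ t, t ∈ Ioo a b → ∀ ℓ, IsNormingAt ℓ (W t) → ℓ (F t) ≤ g t)
    {t : ℝ} (ht : t ∈ Icc a b) :
    ‖W t‖ ≤ ‖w₀‖ + ∫ s in a..t, g s := by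
  have hab : a ≤ b := ht.1.trans ht.2
  have hac : AbsolutelyContinuousOnInterval (fun t => ‖W t‖) a b :=
    absolutelyContinuousOnInterval_norm_of_eq_add_integral hF (uIcc_of_le hab ▸ hW)
  have hderiv : ∀ᵐ s, s ∈ Ioo a b → deriv (fun s => ‖W s‖) s ≤ g s := by
    filter_upwards [hac.ae_differentiableAt, ae_hasDerivAt_of_eq_add_integral hF hW, hFg]
      with s hns hWs hFs hs
    obtain ⟨ℓ, hℓ⟩ := exists_isNormingAt (W s)
    rw [hℓ.deriv_norm_eq (hWs hs) (hns (uIcc_of_le hab ▸ Ioo_subset_Icc_self hs))]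
    exact hFs hs ℓ hℓ
  have hsub : uIcc a t ⊆ uIcc a b := uIcc_subset_uIcc_left (uIcc_of_le hab ▸ ht)
  have hac' := hac.mono hsub
  have hle : ∫ s in a..t, deriv (fun s => ‖W s‖) s ≤ ∫ s in a..t, g s := by
    refine intervalIntegral.integral_mono_ae_restrict ht.1 hac'.intervalIntegrable_deriv
      (hg.mono_set hsub) ?_
    rw [← restrict_Ioo_eq_restrict_Icc]
    refine (ae_restrict_iff' measurableSet_Ioo).2 ?_
    filter_upwards [hderiv] with s hs hst using hs (Ioo_subset_Ioo_right ht.2 hst)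
  have hWa : W a = w₀ := by simpa using hW a (left_mem_Icc.2 hab)
  rw [hac'.integral_deriv_eq_sub, hWa] at hle
  linarith

end Primitive

end NormingFunctional

section SecondDerivative

lemma deriv_deriv_nonpos_of_isLocalMax {f : ℝ → ℝ} {x : ℝ} (hf : ContinuousAt f x)
    (hmax : IsLocalMax f x) : deriv (deriv f) x ≤ 0 := by
  by_contra! hpos
  have hmin : IsLocalMin f x := isLocalMin_of_deriv_deriv_pos hpos hmax.deriv_eq_zero hf
  have hconst : f =ᶠ[𝓝 x] fun _ => f x :=
    (hmax.and hmin).mono fun _ h => le_antisymm h.1 h.2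
  simp [hconst.deriv.deriv_eq] at hpos

lemma fderiv_fderiv_apply_self_nonpos_of_isLocalMax {E : Type*} [NormedAddCommGroup E]
    [NormedSpace ℝ E] {f : E → ℝ} {x : E} (hf : ContDiffAt ℝ 2 f x) (hmax : IsLocalMax f x)
    (v : E) : fderiv ℝ (fderiv ℝ f) x v v ≤ 0 := by
  have hline (r : ℝ) : HasDerivAt (fun r : ℝ => x + r • v) v r := by
    simpa using ((hasDerivAt_id r).smul_const v).const_add x
  have htend : Tendsto (fun r : ℝ => x + r • v) (𝓝 0) (𝓝 x) := by
    simpa using (hline 0).continuousAt.tendsto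
  have hderiv : deriv (fun r : ℝ => f (x + r • v)) =ᶠ[𝓝 0]
      fun r => fderiv ℝ f (x + r • v) v := by
    filter_upwards [htend.eventually (hf.eventually (by simp))] with r hr
    have hfr : HasFDerivAt f (fderiv ℝ f (x + r • v)) (x + r • v) :=
      (hr.differentiableAt (by simp)).hasFDerivAt
    exact (hfr.comp_hasDerivAt r (hline r)).deriv
  have hderiv2 : HasDerivAt (fun r : ℝ => fderiv ℝ f (x + r • v) v)
      (fderiv ℝ (fderiv ℝ f) x v v) 0 := by
    have hf' : HasFDerivAt (fderiv ℝ f) (fderiv ℝ (fderiv ℝ f) x) (x + (0 : ℝ) • v) := by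
      rw [zero_smul, add_zero]
      exact ((hf.fderiv_right (m := 1) le_rfl).differentiableAt one_ne_zero).hasFDerivAt
    have hcomp : HasDerivAt (fun r : ℝ => fderiv ℝ f (x + r • v)) (fderiv ℝ (fderiv ℝ f) x v) 0 :=
      hf'.comp_hasDerivAt 0 (hline 0)
    exact (ContinuousLinearMap.apply ℝ ℝ v).hasFDerivAt.comp_hasDerivAt 0 hcomp
  rw [← hderiv2.deriv, ← hderiv.deriv_eq]
  have hcont : ContinuousAt (fun r : ℝ => f (x + r • v)) 0 :=
    ContinuousAt.comp (by simpa using hf.continuousAt) (hline 0).continuousAt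
  refine deriv_deriv_nonpos_of_isLocalMax hcont ?_
  simpa [IsLocalMax, IsMaxFilter] using htend.eventually hmax

open scoped MatrixOrder in
lemma sum_mul_nonneg_of_posSemidef {ι : Type*} [Fintype ι] {a : ι → ι → ℝ} {H : Matrix ι ι ℝ}
    (ha : ∀ ξ : ι → ℝ, 0 ≤ ∑ i, ∑ j, a i j * ξ i * ξ j) (hH : H.PosSemidef) :
    0 ≤ ∑ i, ∑ j, a i j * H i j := by
  classical
  obtain ⟨B, hB⟩ := CStarAlgebra.nonneg_iff_eq_star_mul_self.mp hH.nonneg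
  have hsum : ∑ i, ∑ j, a i j * H i j = ∑ k, ∑ i, ∑ j, a i j * B k i * B k j := by
    simp only [hB, Matrix.mul_apply, Matrix.star_apply, star_trivial, Finset.mul_sum, ← mul_assoc]
    exact ((Finset.sum_comm).trans (Finset.sum_congr rfl fun i _ => Finset.sum_comm)).symm
  rw [hsum]
  exact Finset.sum_nonneg fun k _ => ha (B k)

variable {d : ℕ} {φ g : (Fin d → ℝ) → ℝ} {x : Fin d → ℝ}

lemma contDiff_pd {m n : WithTop ℕ∞} (hφ : ContDiff ℝ n φ) (hmn : m + 1 ≤ n) (i : Fin d) :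
    ContDiff ℝ m (pd i φ) :=
  (hφ.fderiv_right hmn).clm_apply contDiff_const

lemma hasCompactSupport_pd (hφ : HasCompactSupport φ) (i : Fin d) :
    HasCompactSupport (pd i φ) :=
  hφ.fderiv_apply ℝ _

lemma pd_pd_eq_fderiv_fderiv (hφ : ContDiffAt ℝ 2 φ x) (i j : Fin d) :
    pd i (pd j φ) x = fderiv ℝ (fderiv ℝ φ) x (Pi.single i 1) (Pi.single j 1) := by
  have hd : DifferentiableAt ℝ (fderiv ℝ φ) x :=
    (hφ.fderiv_right (m := 1) le_rfl).differentiableAt one_ne_zero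
  change fderiv ℝ (fun y => fderiv ℝ φ y (Pi.single j 1)) x (Pi.single i 1) = _
  simp [fderiv_clm_apply hd (differentiableAt_const _)]

lemma sum_sum_mul_mul_pd_pd (hφ : ContDiffAt ℝ 2 φ x) (ξ : Fin d → ℝ) :
    ∑ i, ∑ j, ξ i * ξ j * pd i (pd j φ) x = fderiv ℝ (fderiv ℝ φ) x ξ ξ := by
  conv_rhs => rw [pi_eq_sum_univ' ξ]
  simp only [pd_pd_eq_fderiv_fderiv hφ, map_sum, map_smul, sum_apply, smul_apply, smul_eq_mul,
    Finset.mul_sum, mul_assoc]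
  rw [Finset.sum_comm]
  simp only [mul_left_comm]

lemma posSemidef_neg_pd_pd_of_isLocalMax (hφ : ContDiffAt ℝ 2 φ x) (hmax : IsLocalMax φ x) :
    (Matrix.of fun i j => -pd i (pd j φ) x).PosSemidef := by
  refine .of_dotProduct_mulVec_nonneg (Matrix.IsHermitian.ext fun i j => ?_) fun ξ => ?_
  · simp [pd_pd_eq_fderiv_fderiv hφ, (hφ.isSymmSndFDerivAt (by simp)).eq (Pi.single i 1)]
  · have h := fderiv_fderiv_apply_self_nonpos_of_isLocalMax hφ hmax ξ
    rw [← sum_sum_mul_mul_pd_pd hφ] at h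
    simpa [dotProduct, Matrix.mulVec, Finset.mul_sum, mul_comm, mul_left_comm, mul_assoc] using h

lemma sum_mul_pd_pd_nonpos_of_isLocalMax {a : Fin d → Fin d → ℝ}
    (ha : ∀ ξ : Fin d → ℝ, 0 ≤ ∑ i, ∑ j, a i j * ξ i * ξ j) (hφ : ContDiffAt ℝ 2 φ x)
    (hmax : IsLocalMax φ x) : ∑ i, ∑ j, a i j * pd i (pd j φ) x ≤ 0 := by
  simpa using sum_mul_nonneg_of_posSemidef ha (posSemidef_neg_pd_pd_of_isLocalMax hφ hmax)

lemma pd_convolution (hg : ContDiff ℝ 1 g) (hgc : HasCompactSupport g)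
    (hφ : LocallyIntegrable φ) (i : Fin d) :
    pd i (g ⋆[ContinuousLinearMap.mul ℝ ℝ, volume] φ)
      = (pd i g ⋆[ContinuousLinearMap.mul ℝ ℝ, volume] φ) := by
  ext x
  rw [pd, (hgc.hasFDerivAt_convolution_left (ContinuousLinearMap.mul ℝ ℝ) hg hφ x).fderiv,
    convolution_def, convolution_def, ContinuousLinearMap.integral_apply]
  · simp [pd]
  · exact (hgc.fderiv ℝ).convolutionExists_left _ (hg.continuous_fderiv one_ne_zero) hφ _

lemma pd_pd_convolution (hg : ContDiff ℝ 2 g) (hgc : HasCompactSupport g)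
    (hφ : LocallyIntegrable φ) (i j : Fin d) :
    pd i (pd j (g ⋆[ContinuousLinearMap.mul ℝ ℝ, volume] φ))
      = (pd i (pd j g) ⋆[ContinuousLinearMap.mul ℝ ℝ, volume] φ) := by
  rw [pd_convolution (hg.of_le one_le_two) hgc hφ,
    pd_convolution (contDiff_pd hg (m := 1) le_rfl j) (hasCompactSupport_pd hgc j) hφ]

lemma continuous_pd_pd (hg : ContDiff ℝ 2 g) (i j : Fin d) : Continuous (pd i (pd j g)) :=
  (contDiff_pd (contDiff_pd hg (m := 1) le_rfl j) (m := 0) le_rfl i).continuous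

lemma integrable_pd_pd (hg : ContDiff ℝ 2 g) (hgc : HasCompactSupport g) (i j : Fin d) :
    Integrable (pd i (pd j g)) :=
  (continuous_pd_pd hg i j).integrable_of_hasCompactSupport
    (hasCompactSupport_pd (hasCompactSupport_pd hgc j) i)

end SecondDerivative

section Correlation

variable {E F : Type*} [NormedAddCommGroup E] [MeasurableSpace E] [BorelSpace E]
  [NormedAddCommGroup F] [NormedSpace ℝ F] {p : ℝ≥0∞} [Fact (1 ≤ p)]

section Translation

variable {μ : Measure E} [μ.IsAddLeftInvariant]

/-- Translation `u ↦ u(z + ·)` on `L_p`, the linear version of the action of `DomAddAct.mk z`. -/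
def translation (z : E) : Lp F p μ →ₗᵢ[ℝ] Lp F p μ :=
  Lp.compMeasurePreservingₗᵢ ℝ (z + ·) (measurePreserving_add_left μ z)

lemma coeFn_translation (z : E) (u : Lp F p μ) : translation z u =ᵐ[μ] fun x => u (z + x) :=
  Lp.coeFn_compMeasurePreserving u (measurePreserving_add_left μ z)

@[simp]
lemma translation_zero (u : Lp F p μ) : translation 0 u = u :=
  zero_vadd Eᵈᵃᵃ u

lemma translation_translation (y z : E) (u : Lp F p μ) :
    translation y (translation z u) = translation (z + y) u :=
  vadd_vadd (DomAddAct.mk y) (DomAddAct.mk z) u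

lemma norm_integral_smul_translation_le (g : E → ℝ) (u : Lp F p μ) :
    ‖∫ y, g y • translation y u ∂μ‖ ≤ (∫ y, ‖g y‖ ∂μ) * ‖u‖ :=
  calc ‖∫ y, g y • translation y u ∂μ‖ ≤ ∫ y, ‖g y • translation y u‖ ∂μ :=
        norm_integral_le_integral_norm _
    _ = (∫ y, ‖g y‖ ∂μ) * ‖u‖ := by
        simp only [norm_smul, LinearIsometry.norm_map, integral_mul_const]

end Translation

variable [NormedSpace ℝ E] [FiniteDimensional ℝ E] {μ : Measure E} [μ.IsAddHaarMeasure]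
  [Fact (p ≠ ∞)]

lemma continuous_translation (u : Lp F p μ) : Continuous fun z => translation z u :=
  show Continuous fun z : E => DomAddAct.mk z +ᵥ u from
    DomAddAct.continuous_mk.vadd continuous_const

lemma integrable_smul_translation {g : E → ℝ} (hg : Integrable g μ) (u : Lp F p μ) :
    Integrable (fun y => g y • translation y u) μ :=
  hg.smul_bdd ‖u‖ (continuous_translation u).aestronglyMeasurable <|
    .of_forall fun y => ((translation y).norm_map u).le

/-- The correlation `x ↦ ∫ g(y) u(x + y) dy` of `u ∈ L_p` with an integrable kernel `g`, as an
operator on `L_p`. It is the adjoint of the convolution with `g`. -/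
def lpCorrelation {g : E → ℝ} (hg : Integrable g μ) : Lp F p μ →L[ℝ] Lp F p μ :=
  LinearMap.mkContinuous
    { toFun u := ∫ y, g y • translation y u ∂μ
      map_add' u v := by
        simp only [map_add, smul_add]
        exact integral_add (integrable_smul_translation hg u) (integrable_smul_translation hg v)
      map_smul' c u := by
        simp only [map_smul, smul_comm _ c, integral_smul, RingHom.id_apply] }
    (∫ y, ‖g y‖ ∂μ) (norm_integral_smul_translation_le g)

variable {g : E → ℝ} (hg : Integrable g μ) (u : Lp F p μ)

lemma lpCorrelation_apply : lpCorrelation hg u = ∫ y, g y • translation y u ∂μ := rfl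

lemma norm_lpCorrelation_le : ‖lpCorrelation hg u‖ ≤ (∫ y, ‖g y‖ ∂μ) * ‖u‖ :=
  norm_integral_smul_translation_le g u

lemma norm_lpCorrelation_normed_le [HasContDiffBump E] (φ : ContDiffBump (0 : E)) :
    ‖lpCorrelation (φ.integrable_normed (μ := μ)) u‖ ≤ ‖u‖ := by
  simpa [Real.norm_of_nonneg (φ.nonneg_normed _), φ.integral_normed]
    using norm_lpCorrelation_le (φ.integrable_normed (μ := μ)) u

variable [CompleteSpace F]

lemma apply_translation_neg_lpCorrelation (ℓ : StrongDual ℝ (Lp F p μ)) (x : E) :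
    ℓ (translation (-x) (lpCorrelation hg u))
      = (g ⋆[ContinuousLinearMap.mul ℝ ℝ, μ] fun z => ℓ (translation (-z) u)) x := by
  have h := (ℓ.comp (translation (-x)).toContinuousLinearMap).integral_comp_comm
    (integrable_smul_translation hg u)
  simp only [ContinuousLinearMap.comp_apply, LinearIsometry.coe_toContinuousLinearMap, map_smul,
    translation_translation] at h
  rw [lpCorrelation_apply, ← h, convolution_def]
  simp [sub_eq_add_neg]

variable [HasContDiffBump E]

lemma tendsto_lpCorrelation_normed {ι : Type*} {φ : ι → ContDiffBump (0 : E)}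
    {l : Filter ι} (hφ : Tendsto (fun i => (φ i).rOut) l (𝓝 0)) (u : Lp F p μ) :
    Tendsto (fun i => lpCorrelation ((φ i).integrable_normed (μ := μ)) u) l (𝓝 u) := by
  have h := ContDiffBump.convolution_tendsto_right_of_continuous (μ := μ) hφ
    ((continuous_translation u).comp continuous_neg) 0
  simpa [convolution_def, lpCorrelation_apply] using h

end Correlation

section Duality

variable {α : Type*} [MeasurableSpace α] {p : ℝ≥0∞} [Fact (1 ≤ p)] {μ : Measure α}

lemma exists_strongDual_eq_integral_mul {φ : α → ℝ} (hφ : MemLp φ (1 - p⁻¹)⁻¹ μ) :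
    ∃ Φ : StrongDual ℝ (Lp ℝ p μ), ∀ u, Φ u = ∫ x, u x * φ x ∂μ := by
  have := ENNReal.HolderConjugate.inv_one_sub_inv' (Fact.out : 1 ≤ p)
  have : Fact (1 ≤ (1 - p⁻¹)⁻¹) := ⟨ENNReal.HolderConjugate.one_le _ p⟩
  refine ⟨((ContinuousLinearMap.mul ℝ ℝ).lpPairing μ p _).flip hφ.toLp, fun u => ?_⟩
  rw [ContinuousLinearMap.flip_apply, ContinuousLinearMap.lpPairing_eq_integral]
  refine integral_congr_ae ?_
  filter_upwards [hφ.coeFn_toLp] with x hx using by simp [hx]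

variable {E : Type*} [NormedAddCommGroup E] [MeasurableSpace E] [BorelSpace E]
  [NormedSpace ℝ E] [FiniteDimensional ℝ E] {μ : Measure E} [μ.IsAddHaarMeasure]
  {g φ : E → ℝ}

lemma integral_convolution_mul_comm {u : E → ℝ} (hg : Continuous g) (hgc : HasCompactSupport g)
    (hφ : Continuous φ) (hφc : HasCompactSupport φ) (hu : LocallyIntegrable u μ) :
    ∫ y, g y * ∫ x, u (y + x) * φ x ∂μ ∂μ
      = ∫ x, u x * (g ⋆[ContinuousLinearMap.mul ℝ ℝ, μ] φ) x ∂μ := by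
  set L := ContinuousLinearMap.mul ℝ ℝ
  have hu' : LocallyIntegrable (fun x => u (-x)) μ := by
    refine (locallyIntegrable_map_homeomorph (Homeomorph.neg E)).1 ?_
    simpa [Measure.map_neg_eq_self] using hu
  have hu'n : LocallyIntegrable (fun x => ‖u (-x)‖) μ := fun x => (hu' x).norm
  have h := convolution_assoc (μ := μ) (ν := μ) L L L L (fun x y z => mul_assoc x y z) (x₀ := 0)
    hg.aestronglyMeasurable hφ.aestronglyMeasurable hu'.aestronglyMeasurable
    (.of_forall (hgc.convolutionExists_left L hg hφ.locallyIntegrable))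
    (.of_forall (hφc.norm.convolutionExists_left L hφ.norm hu'n))
    (hgc.norm.convolutionExists_left L hg.norm
      (hφc.norm.continuous_convolution_left L hφ.norm hu'n).locallyIntegrable 0)
  simpa [convolution_def, L, mul_comm, add_comm] using h.symm

lemma integral_lpCorrelation_mul [Fact (p ≠ ∞)] (hg : Continuous g) (hgc : HasCompactSupport g)
    (hφ : Continuous φ) (hφc : HasCompactSupport φ) (u : Lp ℝ p μ) :
    ∫ x, lpCorrelation (hg.integrable_of_hasCompactSupport hgc) u x * φ x ∂μ
      = ∫ x, u x * (g ⋆[ContinuousLinearMap.mul ℝ ℝ, μ] φ) x ∂μ := by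
  obtain ⟨Φ, hΦ⟩ := exists_strongDual_eq_integral_mul (p := p)
    (hφ.memLp_of_hasCompactSupport hφc (μ := μ))
  have hΦt (y : E) : Φ (translation y u) = ∫ x, u (y + x) * φ x ∂μ := by
    rw [hΦ]
    refine integral_congr_ae ?_
    filter_upwards [coeFn_translation y u] with x hx using by rw [hx]
  have hΦc : Φ (lpCorrelation (hg.integrable_of_hasCompactSupport hgc) u)
      = ∫ y, g y * ∫ x, u (y + x) * φ x ∂μ ∂μ := by
    rw [lpCorrelation_apply, ← Φ.integral_comp_comm
      (integrable_smul_translation (hg.integrable_of_hasCompactSupport hgc) u)]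
    simp only [map_smul, hΦt, smul_eq_mul]
  rw [← hΦ, hΦc, integral_convolution_mul_comm hg hgc hφ hφc
    ((Lp.memLp u).locallyIntegrable Fact.out)]

lemma Lp_ext_of_integral_mul_eq {v w : Lp ℝ p μ}
    (h : ∀ φ : E → ℝ, ContDiff ℝ (⊤ : ℕ∞) φ → HasCompactSupport φ →
      ∫ x, v x * φ x ∂μ = ∫ x, w x * φ x ∂μ) : v = w := by
  ext1
  exact ae_eq_of_integral_contDiff_smul_eq ((Lp.memLp v).locallyIntegrable Fact.out)
    ((Lp.memLp w).locallyIntegrable Fact.out)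
    fun φ hφ hφc => by simpa only [smul_eq_mul, mul_comm] using h φ hφ hφc

end Duality

section MollifiedOperator

variable {d : ℕ} {ρ : (Fin d → ℝ) → ℝ} {p : ℝ≥0∞} [Fact (1 ≤ p)] [Fact (p ≠ ∞)]

section Dissipative

variable {F : Type*} [NormedAddCommGroup F] [NormedSpace ℝ F]

/-- The operator `u ↦ ∑ aⁱʲ u_{xⁱxʲ}` composed with the correlation with `ρ`; both derivatives are
moved onto `ρ`, so that it is bounded on `L_p`. -/
def mollifiedOperator (hρ : ContDiff ℝ 2 ρ) (hρc : HasCompactSupport ρ) (a : Fin d → Fin d → ℝ) :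
    Lp F p (volume : Measure (Fin d → ℝ)) →L[ℝ] Lp F p (volume : Measure (Fin d → ℝ)) :=
  ∑ i, ∑ j, a i j • lpCorrelation (integrable_pd_pd hρ hρc i j)

lemma mollifiedOperator_apply (hρ : ContDiff ℝ 2 ρ) (hρc : HasCompactSupport ρ)
    (a : Fin d → Fin d → ℝ) (v : Lp F p (volume : Measure (Fin d → ℝ))) :
    mollifiedOperator hρ hρc a v
      = ∑ i, ∑ j, a i j • lpCorrelation (integrable_pd_pd hρ hρc i j) v := by
  simp only [mollifiedOperator, sum_apply, smul_apply]

lemma IsNormingAt.isLocalMax_convolution [CompleteSpace F]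
    {ℓ : StrongDual ℝ (Lp F p (volume : Measure (Fin d → ℝ)))}
    (hρ : Integrable ρ) {v : Lp F p (volume : Measure (Fin d → ℝ))}
    (hℓ : IsNormingAt ℓ (lpCorrelation hρ v)) :
    IsLocalMax (ρ ⋆[ContinuousLinearMap.mul ℝ ℝ, volume] fun z => ℓ (translation (-z) v)) 0 :=
  .of_forall fun x => by
    simp only [← apply_translation_neg_lpCorrelation hρ, neg_zero, translation_zero, hℓ.2]
    simpa using hℓ.apply_le_norm (translation (-x) (lpCorrelation hρ v))

theorem IsNormingAt.apply_mollifiedOperator_nonpos [CompleteSpace F]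
    {ℓ : StrongDual ℝ (Lp F p (volume : Measure (Fin d → ℝ)))} {a : Fin d → Fin d → ℝ}
    {v : Lp F p (volume : Measure (Fin d → ℝ))} (hρ : ContDiff ℝ 2 ρ) (hρc : HasCompactSupport ρ)
    (ha : ∀ ξ : Fin d → ℝ, 0 ≤ ∑ i, ∑ j, a i j * ξ i * ξ j)
    (hℓ : IsNormingAt ℓ (lpCorrelation (hρ.continuous.integrable_of_hasCompactSupport hρc) v)) :
    ℓ (mollifiedOperator hρ hρc a v) ≤ 0 := by
  set ψ : (Fin d → ℝ) → ℝ := fun z => ℓ (translation (-z) v)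
  have hψ : LocallyIntegrable ψ :=
    (ℓ.continuous.comp ((continuous_translation v).comp continuous_neg)).locallyIntegrable
  have happly : ∀ i j, ℓ (lpCorrelation (integrable_pd_pd hρ hρc i j) v)
      = pd i (pd j (ρ ⋆[ContinuousLinearMap.mul ℝ ℝ, volume] ψ)) 0 := fun i j => by
    rw [pd_pd_convolution hρ hρc hψ, ← apply_translation_neg_lpCorrelation, neg_zero,
      translation_zero]
  simp only [mollifiedOperator_apply, map_sum, map_smul, smul_eq_mul, happly]
  exact sum_mul_pd_pd_nonpos_of_isLocalMax ha
    (hρc.contDiff_convolution_left _ hρ hψ).contDiffAt hℓ.isLocalMax_convolution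

end Dissipative

lemma abs_le_aMax (a : ℝ → Fin d → Fin d → ℝ) (t : ℝ) (i j : Fin d) : |a t i j| ≤ aMax a t :=
  (le_ciSup (f := fun j => |a t i j|) (finite_range _).bddAbove j).trans
    (le_ciSup (f := fun i => ⨆ j, |a t i j|) (finite_range _).bddAbove i)

lemma integrable_mollifiedOperator {ν : Measure ℝ} {a : ℝ → Fin d → Fin d → ℝ}
    {u : ℝ → Lp ℝ p (volume : Measure (Fin d → ℝ))} (hρ : ContDiff ℝ 2 ρ)
    (hρc : HasCompactSupport ρ) (ha : ∀ i j, AEMeasurable (fun t => a t i j) ν)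
    (hu : AEStronglyMeasurable u ν) (hau : Integrable (fun t => aMax a t * ‖u t‖) ν) :
    Integrable (fun t => mollifiedOperator hρ hρc (a t) (u t)) ν := by
  simp only [mollifiedOperator_apply]
  refine integrable_finsetSum _ fun i _ => integrable_finsetSum _ fun j _ => ?_
  set D : Lp ℝ p (volume : Measure (Fin d → ℝ)) →L[ℝ] Lp ℝ p (volume : Measure (Fin d → ℝ)) :=
    lpCorrelation (integrable_pd_pd hρ hρc i j)
  refine (hau.const_mul ‖D‖).mono' ((ha i j).aestronglyMeasurable.smul
    (D.continuous.comp_aestronglyMeasurable hu)) (.of_forall fun t => ?_)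
  calc ‖a t i j • D (u t)‖ = |a t i j| * ‖D (u t)‖ := norm_smul _ _
    _ ≤ aMax a t * (‖D‖ * ‖u t‖) :=
      mul_le_mul (abs_le_aMax a t i j) (D.le_opNorm _) (norm_nonneg _)
        ((abs_nonneg _).trans (abs_le_aMax a t i j))
    _ = ‖D‖ * (aMax a t * ‖u t‖) := mul_left_comm _ _ _

lemma integral_mollifiedOperator_mul {φ : (Fin d → ℝ) → ℝ} (hρ : ContDiff ℝ 2 ρ)
    (hρc : HasCompactSupport ρ) (hφ : Continuous φ) (hφc : HasCompactSupport φ)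
    (b : Fin d → Fin d → ℝ) (v : Lp ℝ p (volume : Measure (Fin d → ℝ))) :
    ∫ x, mollifiedOperator hρ hρc b v x * φ x
      = ∑ i, ∑ j, b i j *
        ∫ x, v x * pd i (pd j (ρ ⋆[ContinuousLinearMap.mul ℝ ℝ, volume] φ)) x := by
  obtain ⟨Φ, hΦ⟩ := exists_strongDual_eq_integral_mul (p := p)
    (hφ.memLp_of_hasCompactSupport hφc (μ := volume))
  simp only [← hΦ, mollifiedOperator_apply, map_sum, map_smul, smul_eq_mul]
  congr! 3 with i _ j _
  rw [hΦ, pd_pd_convolution hρ hρc hφ.locallyIntegrable,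
    integral_lpCorrelation_mul (continuous_pd_pd hρ i j)
      (hasCompactSupport_pd (hasCompactSupport_pd hρc j) i) hφ hφc]

variable {T : ℝ} {a : ℝ → Fin d → Fin d → ℝ} {u0 : Lp ℝ p (volume : Measure (Fin d → ℝ))}
  {f u : ℝ → Lp ℝ p (volume : Measure (Fin d → ℝ))}

lemma IsWeakSolution.lpCorrelation_eq_add_integral (hw : IsWeakSolution p T a u0 f u)
    (hρ : ContDiff ℝ (⊤ : ℕ∞) ρ) (hρc : HasCompactSupport ρ) (hρi : Integrable ρ volume)
    (hF : IntegrableOn (fun s => mollifiedOperator (hρ.of_le ENat.LEInfty.out) hρc (a s) (u s)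
      + lpCorrelation hρi (f s)) (Ioc 0 T))
    {t : ℝ} (ht : t ∈ Icc 0 T) :
    lpCorrelation hρi (u t)
      = lpCorrelation hρi u0
        + ∫ s in 0..t, (mollifiedOperator (hρ.of_le ENat.LEInfty.out) hρc (a s) (u s)
          + lpCorrelation hρi (f s)) := by
  refine Lp_ext_of_integral_mul_eq fun φ hφ hφc => ?_
  obtain ⟨Φ, hΦ⟩ := exists_strongDual_eq_integral_mul (p := p)
    (hφ.continuous.memLp_of_hasCompactSupport hφc (μ := volume))
  have hψ := hw (ρ ⋆[ContinuousLinearMap.mul ℝ ℝ, volume] φ)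
    (hρc.contDiff_convolution_left _ hρ hφ.continuous.locallyIntegrable)
    (hρc.convolution _ hφc) t ht
  rw [← hΦ (lpCorrelation hρi u0 + _), map_add, intervalIntegral.integral_of_le ht.1,
    ← Φ.integral_comp_comm (hF.mono_set (Ioc_subset_Ioc_right ht.2))]
  simp_rw [map_add, hΦ, integral_lpCorrelation_mul hρ.continuous hρc hφ.continuous hφc,
    integral_mollifiedOperator_mul (hρ.of_le ENat.LEInfty.out) hρc hφ.continuous hφc]
  exact hψ

lemma IsWeakSolution.norm_lpCorrelation_le (hw : IsWeakSolution p T a u0 f u)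
    (ham : ∀ i j, AEMeasurable (fun t => a t i j) (volume.restrict (Ioc 0 T)))
    (hap : ∀ᵐ t ∂volume.restrict (Ioc 0 T), ∀ ξ : Fin d → ℝ, 0 ≤ ∑ i, ∑ j, a t i j * ξ i * ξ j)
    (hf : IntegrableOn f (Ioc 0 T)) (hu : AEStronglyMeasurable u (volume.restrict (Ioc 0 T)))
    (hau : IntegrableOn (fun t => aMax a t * ‖u t‖) (Ioc 0 T))
    (hρ : ContDiff ℝ (⊤ : ℕ∞) ρ) (hρc : HasCompactSupport ρ) (hρi : Integrable ρ volume)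
    {t : ℝ} (ht : t ∈ Icc 0 T) :
    ‖lpCorrelation hρi (u t)‖
      ≤ ‖lpCorrelation hρi u0‖ + ∫ s in 0..t, ‖lpCorrelation hρi (f s)‖ := by
  have hT : 0 ≤ T := ht.1.trans ht.2
  have hf' : IntegrableOn (fun s => lpCorrelation hρi (f s)) (Ioc 0 T) :=
    (lpCorrelation (F := ℝ) (p := p) hρi).integrable_comp hf
  have hF : IntegrableOn (fun s => mollifiedOperator (hρ.of_le ENat.LEInfty.out) hρc (a s) (u s)
      + lpCorrelation hρi (f s)) (Ioc 0 T) :=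
    (integrable_mollifiedOperator _ hρc ham hu hau).add hf'
  refine norm_le_norm_add_integral_of_isNormingAt_apply_le
    ((intervalIntegrable_iff_integrableOn_Ioc_of_le hT).2 hF)
    ((intervalIntegrable_iff_integrableOn_Ioc_of_le hT).2 hf'.norm)
    (fun s hs => hw.lpCorrelation_eq_add_integral hρ hρc hρi hF hs) ?_ ht
  filter_upwards [(ae_restrict_iff' measurableSet_Ioc).1 hap] with s hs hsT ℓ hℓ
  rw [map_add]
  exact add_le_of_nonpos_of_le (hℓ.apply_mollifiedOperator_nonpos _ hρc
    (hs (Ioo_subset_Ioc_self hsT))) (hℓ.apply_le_norm _)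

theorem IsWeakSolution.norm_le_add_integral (hw : IsWeakSolution p T a u0 f u)
    (ham : ∀ i j, AEMeasurable (fun t => a t i j) (volume.restrict (Ioc 0 T)))
    (hap : ∀ᵐ t ∂volume.restrict (Ioc 0 T), ∀ ξ : Fin d → ℝ, 0 ≤ ∑ i, ∑ j, a t i j * ξ i * ξ j)
    (hf : IntegrableOn f (Ioc 0 T)) (hu : AEStronglyMeasurable u (volume.restrict (Ioc 0 T)))
    (hau : IntegrableOn (fun t => aMax a t * ‖u t‖) (Ioc 0 T)) {t : ℝ} (ht : t ∈ Icc 0 T) :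
    ‖u t‖ ≤ ‖u0‖ + ∫ s in 0..t, ‖f s‖ := by
  let φ (n : ℕ) : ContDiffBump (0 : Fin d → ℝ) :=
    { rIn := 1 / (n + 1) / 2
      rOut := 1 / (n + 1)
      rIn_pos := by positivity
      rIn_lt_rOut := half_lt_self (by positivity) }
  have hφ : Tendsto (fun n => (φ n).rOut) atTop (𝓝 0) := tendsto_one_div_add_atTop_nhds_zero_nat
  refine le_of_tendsto (tendsto_lpCorrelation_normed hφ (u t)).norm (.of_forall fun n => ?_)
  have hft : IntegrableOn (fun s => ‖f s‖) (Ioc 0 t) :=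
    (hf.mono_set (Ioc_subset_Ioc_right ht.2)).norm
  calc ‖lpCorrelation (φ n).integrable_normed (u t)‖
      ≤ ‖lpCorrelation (φ n).integrable_normed u0‖
        + ∫ s in 0..t, ‖lpCorrelation (φ n).integrable_normed (f s)‖ :=
        hw.norm_lpCorrelation_le ham hap hf hu hau (φ n).contDiff_normed
          (φ n).hasCompactSupport_normed _ ht
    _ ≤ ‖u0‖ + ∫ s in 0..t, ‖f s‖ := by
        simp only [intervalIntegral.integral_of_le ht.1]
        exact add_le_add (norm_lpCorrelation_normed_le _ _) <| integral_mono_of_nonneg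
          (.of_forall fun _ => norm_nonneg _) hft
          (.of_forall fun s => norm_lpCorrelation_normed_le _ _)

end MollifiedOperator

section Jensen

variable {α : Type*} [MeasurableSpace α] {μ : Measure α} {p : ℝ}

lemma memLp_of_integrable_norm_rpow {F : Type*} [NormedAddCommGroup F] {f : α → F} (hp : 0 < p)
    (hf : AEStronglyMeasurable f μ) (hfp : Integrable (fun x => ‖f x‖ ^ p) μ) :
    MemLp f (ENNReal.ofReal p) μ := by
  refine (integrable_norm_rpow_iff hf (by simpa) ofReal_ne_top).1 ?_
  rwa [toReal_ofReal hp.le]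

lemma rpow_add_mul_sub_le_rpow {c y : ℝ} (hp : 1 ≤ p) (hc : 0 < c) (hy : 0 ≤ y) :
    c ^ p + p * c ^ (p - 1) * (y - c) ≤ y ^ p := by
  have hbernoulli : 1 + p * (y / c - 1) ≤ (y / c) ^ p := by
    simpa using one_add_mul_self_le_rpow_one_add (s := y / c - 1)
      (by linarith [div_nonneg hy hc.le]) hp
  calc c ^ p + p * c ^ (p - 1) * (y - c) = c ^ p * (1 + p * (y / c - 1)) := by
        rw [Real.rpow_sub_one hc.ne']
        field_simp
    _ ≤ c ^ p * (y / c) ^ p := by gcongr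
    _ = y ^ p := by rw [← Real.mul_rpow hc.le (by positivity), mul_div_cancel₀ y hc.ne']

lemma measureReal_univ_mul_rpow_add_mul_sub_le_integral_rpow [IsFiniteMeasure μ] {c : ℝ}
    {g : α → ℝ} (hp : 1 ≤ p) (hc : 0 < c) (hg0 : ∀ y, 0 ≤ g y) (hg : Integrable g μ)
    (hgp : Integrable (fun y => g y ^ p) μ) :
    μ.real univ * c ^ p + p * c ^ (p - 1) * (∫ y, g y ∂μ - μ.real univ * c)
      ≤ ∫ y, g y ^ p ∂μ := by
  have hgc : Integrable (fun y => p * c ^ (p - 1) * (g y - c)) μ :=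
    (hg.sub (integrable_const c)).const_mul _
  have h := integral_mono ((integrable_const (c ^ p)).add hgc) hgp
    fun y => rpow_add_mul_sub_le_rpow hp hc (hg0 y)
  simpa [integral_add (integrable_const _) hgc, integral_const_mul,
    integral_sub hg (integrable_const c)] using h

/-- Jensen's inequality for a unit mass at `x` plus the image of `μ` under `g`. -/
lemma add_integral_rpow_le [IsFiniteMeasure μ] {x : ℝ} {g : α → ℝ} (hp : 1 ≤ p) (hx : 0 ≤ x)
    (hg0 : ∀ y, 0 ≤ g y) (hg : Integrable g μ) (hgp : Integrable (fun y => g y ^ p) μ) :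
    (x + ∫ y, g y ∂μ) ^ p ≤ (1 + μ.real univ) ^ (p - 1) * (x ^ p + ∫ y, g y ^ p ∂μ) := by
  set M := 1 + μ.real univ
  set S := x + ∫ y, g y ∂μ
  have hM : 0 < M := by positivity
  have hS : 0 ≤ S := add_nonneg hx (integral_nonneg hg0)
  have hgp0 : 0 ≤ ∫ y, g y ^ p ∂μ := integral_nonneg fun y => Real.rpow_nonneg (hg0 y) p
  rcases hS.eq_or_lt with hS0 | hS0
  · rw [← hS0, Real.zero_rpow (by linarith)]
    positivity
  set c := S / M
  have hc : 0 < c := div_pos hS0 hM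
  have hcM : M * c = S := mul_div_cancel₀ S hM.ne'
  have hsum : M * c ^ p ≤ x ^ p + ∫ y, g y ^ p ∂μ :=
    calc M * c ^ p = c ^ p + p * c ^ (p - 1) * (x - c) + (μ.real univ * c ^ p
          + p * c ^ (p - 1) * (∫ y, g y ∂μ - μ.real univ * c)) := by
          linear_combination (p * c ^ (p - 1)) * hcM
      _ ≤ x ^ p + ∫ y, g y ^ p ∂μ := add_le_add (rpow_add_mul_sub_le_rpow hp hc hx)
          (measureReal_univ_mul_rpow_add_mul_sub_le_integral_rpow hp hc hg0 hg hgp)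
  calc S ^ p = M ^ (p - 1) * (M * c ^ p) := by
        rw [← hcM, Real.mul_rpow hM.le hc.le, Real.rpow_sub_one hM.ne']
        field_simp
    _ ≤ M ^ (p - 1) * (x ^ p + ∫ y, g y ^ p ∂μ) := by gcongr

end Jensen

theorem a_priori_estimate_general {p T : ℝ} [Fact (1 ≤ ENNReal.ofReal p)] {d : ℕ}
    {a : ℝ → Fin d → Fin d → ℝ}
    (ham : ∀ i j, AEMeasurable (fun t => a t i j) (volume.restrict (Ioc 0 T)))
    (hap : ∀ᵐ t ∂volume.restrict (Ioc 0 T), ∀ ξ : Fin d → ℝ, 0 ≤ ∑ i, ∑ j, a t i j * ξ i * ξ j)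
    {u0 : Lp ℝ (ENNReal.ofReal p) (volume : Measure (Fin d → ℝ))}
    {f u : ℝ → Lp ℝ (ENNReal.ofReal p) (volume : Measure (Fin d → ℝ))}
    (hf : AEStronglyMeasurable f (volume.restrict (Ioc 0 T)))
    (hfp : IntegrableOn (fun t => ‖f t‖ ^ p) (Ioc 0 T))
    (hw : IsWeakSolution (ENNReal.ofReal p) T a u0 f u)
    (hu : AEStronglyMeasurable u (volume.restrict (Ioc 0 T)))
    (hau : IntegrableOn (fun t => aMax a t * ‖u t‖) (Ioc 0 T)) {t : ℝ} (ht : t ∈ Icc 0 T) :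
    ‖u t‖ ^ p ≤ (1 + T) ^ (p - 1) * (‖u0‖ ^ p + ∫ s in Ioc 0 T, ‖f s‖ ^ p) := by
  have hp : 1 ≤ p := one_le_ofReal.1 Fact.out
  have hT : 0 ≤ T := ht.1.trans ht.2
  have : Fact (ENNReal.ofReal p ≠ ∞) := ⟨ofReal_ne_top⟩
  have hfi : IntegrableOn f (Ioc 0 T) :=
    (memLp_of_integrable_norm_rpow (by linarith) hf hfp).integrable Fact.out
  have hmono : ∫ s in 0..t, ‖f s‖ ≤ ∫ s in Ioc 0 T, ‖f s‖ := by
    rw [intervalIntegral.integral_of_le ht.1]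
    exact setIntegral_mono_set hfi.norm (.of_forall fun _ => norm_nonneg _)
      (Ioc_subset_Ioc_right ht.2).eventuallyLE
  calc ‖u t‖ ^ p ≤ (‖u0‖ + ∫ s in Ioc 0 T, ‖f s‖) ^ p := by
        gcongr
        exact (hw.norm_le_add_integral ham hap hfi hu hau ht).trans (by gcongr)
    _ ≤ (1 + T) ^ (p - 1) * (‖u0‖ ^ p + ∫ s in Ioc 0 T, ‖f s‖ ^ p) := by
        simpa [hT] using add_integral_rpow_le hp (norm_nonneg u0)
          (fun s => norm_nonneg (f s)) hfi.norm hfp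

/-- A priori estimate: `sup_{t ≤ T} ‖u(t)‖_{L_p}^p ≤ N (‖u₀‖_{L_p}^p + ∫_0^T ‖f(t)‖_{L_p}^p dt)`
with `N = N(p,T)` independent of the (possibly unbounded, degenerate) coefficients. -/
theorem a_priori_estimate (p T : ℝ) (hp : 1 < p) (hT : 0 < T)
    [Fact (1 ≤ ENNReal.ofReal p)] :
    ∃ N : ℝ, 0 < N ∧
      ∀ (d : ℕ), 0 < d →
      ∀ (a : ℝ → Fin d → Fin d → ℝ),
        (∀ i j, Measurable fun t => a t i j) →
        (∀ t ∈ Ioc (0:ℝ) T, ∀ i j, a t i j = a t j i) →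
        (∀ t ∈ Ioc (0:ℝ) T, ∀ ξ : Fin d → ℝ,
          0 ≤ ∑ i, ∑ j, a t i j * ξ i * ξ j) →
      ∀ (u0 : Lp ℝ (ENNReal.ofReal p) (volume : Measure (Fin d → ℝ)))
        (f u : ℝ → Lp ℝ (ENNReal.ofReal p) (volume : Measure (Fin d → ℝ))),
        AEStronglyMeasurable f (volume.restrict (Ioc (0:ℝ) T)) →
        IntegrableOn (fun t => ‖f t‖ ^ p) (Ioc (0:ℝ) T) →
        IsWeakSolution (ENNReal.ofReal p) T a u0 f u →
        ContinuousOn u (Icc (0:ℝ) T) →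
        IntegrableOn (fun t => aMax a t * ‖u t‖) (Ioc (0:ℝ) T) →
        ∀ t ∈ Icc (0:ℝ) T,
          ‖u t‖ ^ p ≤ N * (‖u0‖ ^ p + ∫ s in Ioc (0:ℝ) T, ‖f s‖ ^ p) := by
  refine ⟨(1 + T) ^ (p - 1), by positivity,
    fun d _ a ham _ hap u0 f u hf hfp hw hu hau t ht => ?_⟩
  exact a_priori_estimate_general (fun i j => (ham i j).aemeasurable)
    ((ae_restrict_mem measurableSet_Ioc).mono hap) hf hfp hw
    ((hu.mono Ioc_subset_Icc_self).aestronglyMeasurable measurableSet_Ioc) hau ht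

end
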